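/- Let Ω ⊆ ℂ be open and connected, F holomorphic on Ω with F ≢ 0, and a ∈ Ω with F(a) = 0. Suppose there exists δ > 0 with the closed δ-ball around a contained in Ω such that either (i) for every y with 0 < |y − a| < δ there exists a solution γ : [0,∞) → Ω of ẋ = F(x) with γ(0) = y and γ(t) → a as t → ∞, or (ii) for every such y there exists a solution γ : (−∞,0] → Ω with γ(0) = y and γ(t) → a as t → −∞. Then F′(a) ≠ 0; that is, stable and unstable nodes and foci of holomorphic flows have order 1. -/

import Mathlib

open Set Filter Topology

/-- A solution of `ẋ = F(x)` on the set `s ⊆ ℝ`, staying in `Ω`. -/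
def IsSolOn (F : ℂ → ℂ) (Ω : Set ℂ) (s : Set ℝ) (γ : ℝ → ℂ) : Prop :=
  ∀ t ∈ s, γ t ∈ Ω ∧ HasDerivWithinAt γ (F (γ t)) s t

/-!
Near an attracting equilibrium `a` the flow defines time-`t` maps `φ_t` of a small disc around `a`,
which are holomorphic with `φ_t'(a) = exp (t F'(a))`: the difference `w` of two solutions solves the
linear equation `w' = q w`, where `q` is the divided difference of `F` along them. A compact disc
around `a` is covered by finitely many neighbourhoods whose orbits return to the disc after a
bounded time, so the `φ_t` are uniformly bounded on it. Since `φ_t → a` pointwise, Cauchy's integral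
formula and dominated convergence give `exp (t F'(a)) → 0`, that is, `Re F'(a) < 0`.
-/

open scoped NNReal

section Lipschitz

theorem locallyLipschitzOn_of_differentiableOn {E : Type*} [NormedAddCommGroup E]
    [NormedSpace ℂ E] [CompleteSpace E] {f : ℂ → E} {s : Set ℂ} (hs : IsOpen s)
    (hf : DifferentiableOn ℂ f s) : LocallyLipschitzOn s f := by
  intro z hz
  obtain ⟨K, t, ht, hK⟩ :=
    (hf.contDiffOn (n := 1) hs |>.contDiffAt (hs.mem_nhds hz)).exists_lipschitzOnWith
  exact ⟨K, t, mem_nhdsWithin_of_mem_nhds ht, hK⟩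

theorem exists_lipschitzOnWith_cthickening {X Y : Type*} [PseudoMetricSpace X] [ProperSpace X]
    [PseudoMetricSpace Y] {f : X → Y} {s K : Set X} (hs : IsOpen s)
    (hf : LocallyLipschitzOn s f) (hK : IsCompact K) (hKs : K ⊆ s) :
    ∃ ρ > 0, ∃ L : ℝ≥0, LipschitzOnWith L f (Metric.cthickening ρ K) := by
  obtain ⟨ρ, hρ, hsub⟩ := hK.exists_cthickening_subset_open hs hKs
  exact ⟨ρ, hρ, (hf.mono hsub).exists_lipschitzOnWith_of_compact hK.cthickening⟩

end Lipschitz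

section Integrals

theorem tendsto_circleIntegral_of_bounded {ι E : Type*} [NormedAddCommGroup E] [NormedSpace ℂ E]
    {l : Filter ι} [l.IsCountablyGenerated] {f : ι → ℂ → E} {g : ℂ → E} {c : ℂ} {R M : ℝ}
    (hR : 0 ≤ R) (hf : ∀ᶠ i in l, ContinuousOn (f i) (Metric.sphere c R))
    (hM : ∀ᶠ i in l, ∀ z ∈ Metric.sphere c R, ‖f i z‖ ≤ M)
    (hlim : ∀ z ∈ Metric.sphere c R, Tendsto (f · z) l (𝓝 (g z))) :
    Tendsto (fun i ↦ ∮ z in C(c, R), f i z) l (𝓝 (∮ z in C(c, R), g z)) := by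
  have hmem (θ : ℝ) : circleMap c R θ ∈ Metric.sphere c R := circleMap_mem_sphere c hR θ
  refine intervalIntegral.tendsto_integral_filter_of_dominated_convergence (fun _ ↦ R * M)
    ?_ ?_ intervalIntegrable_const ?_
  · filter_upwards [hf] with i hi
    have hcont : Continuous fun θ ↦ f i (circleMap c R θ) :=
      hi.comp_continuous (continuous_circleMap c R) hmem
    simp only [deriv_circleMap]
    exact (Continuous.smul (by fun_prop) hcont).aestronglyMeasurable
  · filter_upwards [hM] with i hi
    refine Eventually.of_forall fun θ _ ↦ ?_
    rw [norm_smul, deriv_circleMap, norm_mul, Complex.norm_I, mul_one, norm_circleMap_zero,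
      abs_of_nonneg hR]
    exact mul_le_mul_of_nonneg_left (hi _ (hmem θ)) hR
  · exact Eventually.of_forall fun θ _ ↦ (hlim _ (hmem θ)).const_smul _

theorem tendsto_deriv_of_bounded_on_sphere {ι E : Type*} [NormedAddCommGroup E] [NormedSpace ℂ E]
    [CompleteSpace E] {l : Filter ι} [l.IsCountablyGenerated] {f : ι → ℂ → E} {g : ℂ → E} {c : ℂ}
    {R M : ℝ} (hR : 0 < R) (hf : ∀ᶠ i in l, DiffContOnCl ℂ (f i) (Metric.ball c R))
    (hg : DiffContOnCl ℂ g (Metric.ball c R))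
    (hM : ∀ᶠ i in l, ∀ z ∈ Metric.sphere c R, ‖f i z‖ ≤ M)
    (hlim : ∀ z ∈ Metric.sphere c R, Tendsto (f · z) l (𝓝 (g z))) :
    Tendsto (fun i ↦ deriv (f i) c) l (𝓝 (deriv g c)) := by
  have hint : Tendsto (fun i ↦ ∮ z in C(c, R), (1 / (z - c) ^ 2) • f i z) l
      (𝓝 (∮ z in C(c, R), (1 / (z - c) ^ 2) • g z)) := by
    refine tendsto_circleIntegral_of_bounded (M := 1 / R ^ 2 * M) hR.le ?_ ?_
      fun z hz ↦ (hlim z hz).const_smul _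
    · filter_upwards [hf] with i hi
      refine ContinuousOn.smul (continuousOn_const.div (by fun_prop) fun z hz ↦ ?_)
        (hi.continuousOn_ball.mono Metric.sphere_subset_closedBall)
      exact pow_ne_zero 2 (sub_ne_zero.2 (Metric.ne_of_mem_sphere hz hR.ne'))
    · filter_upwards [hM] with i hi z hz
      rw [norm_smul, norm_div, norm_one, norm_pow, mem_sphere_iff_norm.1 hz]
      exact mul_le_mul_of_nonneg_left (hi z hz) (by positivity)
  rw [hg.deriv_eq_smul_circleIntegral hR] at hint
  have hπ : (2 * Real.pi * Complex.I : ℂ) ≠ 0 := Complex.two_pi_I_ne_zero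
  refine (tendsto_const_smul_iff₀ hπ).1 (hint.congr' ?_)
  filter_upwards [hf] with i hi using hi.deriv_eq_smul_circleIntegral hR

theorem eq_mul_exp_integral_of_hasDerivWithinAt {w q : ℝ → ℂ} {a b : ℝ} (hab : a ≤ b)
    (hq : ContinuousOn q (Icc a b)) (hw : ContinuousOn w (Icc a b))
    (hw' : ∀ t ∈ Ico a b, HasDerivWithinAt w (q t * w t) (Ici t) t) :
    w b = w a * Complex.exp (∫ s in a..b, q s) := by
  set Q : ℝ → ℂ := fun t ↦ ∫ s in a..t, q s
  have hQc : ContinuousOn Q (Icc a b) := by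
    rw [← uIcc_of_le hab] at hq ⊢
    exact intervalIntegral.continuousOn_primitive_interval hq.integrableOn_uIcc
  have hQ' (t : ℝ) (ht : t ∈ Ico a b) : HasDerivWithinAt Q (q t) (Ici t) t := by
    have hnhds : Icc a b ∈ 𝓝[>] t := mem_of_superset (Ioc_mem_nhdsGT ht.2)
      (Ioc_subset_Icc_self.trans (Icc_subset_Icc_left ht.1))
    refine intervalIntegral.integral_hasDerivWithinAt_right (t := Ioi t)
      ((hq.mono (Icc_subset_Icc_right ht.2.le)).intervalIntegrable_of_Icc ht.1)
      ⟨Icc a b, hnhds, hq.aestronglyMeasurable measurableSet_Icc⟩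
      ((hq t (Ico_subset_Icc_self ht)).mono_of_mem_nhdsWithin hnhds)
  have hconst : w b * Complex.exp (-Q b) = w a * Complex.exp (-Q a) := by
    refine constant_of_has_deriv_right_zero (f := fun t ↦ w t * Complex.exp (-Q t))
      (hw.mul hQc.neg.cexp) (fun t ht ↦ ?_) b (right_mem_Icc.2 hab)
    exact ((hw' t ht).mul (hQ' t ht).fun_neg.cexp).congr_deriv (by ring)
  have hQa : Q a = 0 := intervalIntegral.integral_same
  rw [hQa, neg_zero, Complex.exp_zero, mul_one] at hconst
  rw [← hconst, mul_assoc, ← Complex.exp_add, neg_add_cancel, Complex.exp_zero, mul_one]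

end Integrals

namespace IsSolOn

variable {F : ℂ → ℂ} {Ω : Set ℂ} {s : Set ℝ} {γ η : ℝ → ℂ}

theorem mono {t : Set ℝ} (hγ : IsSolOn F Ω s γ) (hts : t ⊆ s) : IsSolOn F Ω t γ :=
  fun x hx ↦ ⟨(hγ x (hts hx)).1, (hγ x (hts hx)).2.mono hts⟩

theorem continuousOn (hγ : IsSolOn F Ω s γ) : ContinuousOn γ s :=
  fun t ht ↦ (hγ t ht).2.continuousWithinAt

theorem image_subset (hγ : IsSolOn F Ω s γ) : γ '' s ⊆ Ω :=
  image_subset_iff.2 fun t ht ↦ (hγ t ht).1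

theorem hasDerivWithinAt_Ici {a b t : ℝ} (hγ : IsSolOn F Ω (Icc a b) γ) (ht : t ∈ Ico a b) :
    HasDerivWithinAt γ (F (γ t)) (Ici t) t :=
  (hγ t (Ico_subset_Icc_self ht)).2.mono_of_mem_nhdsWithin (Icc_mem_nhdsGE_of_mem ht)

theorem hasDerivWithinAt_Iic {a b t : ℝ} (hγ : IsSolOn F Ω (Icc a b) γ) (ht : t ∈ Ioc a b) :
    HasDerivWithinAt γ (F (γ t)) (Iic t) t :=
  (hγ t (Ioc_subset_Icc_self ht)).2.mono_of_mem_nhdsWithin (Icc_mem_nhdsLE_of_mem ht)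

theorem const {y : ℂ} (hy : y ∈ Ω) (hFy : F y = 0) : IsSolOn F Ω s fun _ ↦ y :=
  fun t _ ↦ ⟨hy, hFy ▸ hasDerivWithinAt_const t s y⟩

theorem comp_add_const (hγ : IsSolOn F Ω s γ) (τ : ℝ) :
    IsSolOn F Ω ((· + τ) ⁻¹' s) fun t ↦ γ (t + τ) := fun t ht ↦ by
  have hderiv := (hγ (t + τ) ht).2.scomp t ((hasDerivAt_id t).add_const τ).hasDerivWithinAt
    (mapsTo_preimage _ s)
  exact ⟨(hγ (t + τ) ht).1, by simpa [Function.comp_def] using hderiv⟩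

theorem comp_neg (hγ : IsSolOn F Ω s γ) :
    IsSolOn (fun z ↦ -F z) Ω (Neg.neg ⁻¹' s) fun t ↦ γ (-t) := fun t ht ↦ by
  have hderiv := (hγ (-t) ht).2.scomp t (hasDerivAt_neg t).hasDerivWithinAt (mapsTo_preimage _ s)
  exact ⟨(hγ (-t) ht).1, by simpa [Function.comp_def] using hderiv⟩

theorem eqOn (hF : LocallyLipschitzOn Ω F) (hs : s.OrdConnected) (hγ : IsSolOn F Ω s γ)
    (hη : IsSolOn F Ω s η) {t₀ : ℝ} (ht₀ : t₀ ∈ s) (h : γ t₀ = η t₀) : EqOn γ η s := by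
  have lipschitz {a b : ℝ} (hab : Icc a b ⊆ s) :
      ∃ L, LipschitzOnWith L F (γ '' Icc a b ∪ η '' Icc a b) :=
    (hF.mono (union_subset (hγ.mono hab).image_subset
      (hη.mono hab).image_subset)).exists_lipschitzOnWith_of_compact
      ((isCompact_Icc.image_of_continuousOn (hγ.mono hab).continuousOn).union
        (isCompact_Icc.image_of_continuousOn (hη.mono hab).continuousOn))
  intro t ht
  rcases le_total t₀ t with htt | htt
  · have hsub : Icc t₀ t ⊆ s := hs.out ht₀ ht
    obtain ⟨L, hL⟩ := lipschitz hsub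
    exact ODE_solution_unique_of_mem_Icc_right (v := fun _ ↦ F) (fun _ _ ↦ hL)
      (hγ.mono hsub).continuousOn (fun _ ↦ (hγ.mono hsub).hasDerivWithinAt_Ici)
      (fun x hx ↦ .inl (mem_image_of_mem γ (Ico_subset_Icc_self hx)))
      (hη.mono hsub).continuousOn (fun _ ↦ (hη.mono hsub).hasDerivWithinAt_Ici)
      (fun x hx ↦ .inr (mem_image_of_mem η (Ico_subset_Icc_self hx))) h (right_mem_Icc.2 htt)
  · have hsub : Icc t t₀ ⊆ s := hs.out ht ht₀
    obtain ⟨L, hL⟩ := lipschitz hsub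
    exact ODE_solution_unique_of_mem_Icc_left (v := fun _ ↦ F) (fun _ _ ↦ hL)
      (hγ.mono hsub).continuousOn (fun _ ↦ (hγ.mono hsub).hasDerivWithinAt_Iic)
      (fun x hx ↦ .inl (mem_image_of_mem γ (Ioc_subset_Icc_self hx)))
      (hη.mono hsub).continuousOn (fun _ ↦ (hη.mono hsub).hasDerivWithinAt_Iic)
      (fun x hx ↦ .inr (mem_image_of_mem η (Ioc_subset_Icc_self hx))) h (left_mem_Icc.2 htt)

/- The comparison function grows strictly faster than the Lipschitz constant `L` allows for
`‖η - γ‖`, so `η` cannot leave the tube on which `F` is `L`-Lipschitz. -/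
theorem norm_sub_le_mul_exp {L : ℝ≥0} {ρ a b : ℝ} (hγ : IsSolOn F Ω (Icc a b) γ)
    (hη : IsSolOn F Ω (Icc a b) η)
    (hL : LipschitzOnWith L F (Metric.cthickening ρ (γ '' Icc a b)))
    (hne : γ a ≠ η a) (hρ : ‖η a - γ a‖ * Real.exp ((L + 1) * (b - a)) ≤ ρ) {t : ℝ}
    (ht : t ∈ Icc a b) : ‖η t - γ t‖ ≤ ‖η a - γ a‖ * Real.exp ((L + 1) * (t - a)) := by
  set B : ℝ → ℝ := fun t ↦ ‖η a - γ a‖ * Real.exp ((L + 1) * (t - a))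
  have hBpos (t : ℝ) : 0 < B t := mul_pos (norm_pos_iff.2 (sub_ne_zero.2 hne.symm)) (Real.exp_pos _)
  have hB (t : ℝ) : HasDerivAt B ((L + 1) * B t) t :=
    ((((hasDerivAt_id t).sub_const a).const_mul (L + 1 : ℝ)).exp.const_mul _).congr_deriv
      (by simp only [id, B]; ring)
  refine image_norm_le_of_norm_deriv_right_lt_deriv_boundary (f := fun t ↦ η t - γ t)
    (hη.continuousOn.sub hγ.continuousOn)
    (fun x hx ↦ (hη.hasDerivWithinAt_Ici hx).sub (hγ.hasDerivWithinAt_Ici hx))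
    (by simp [B]) hB (fun x hx hxB ↦ ?_) ht
  have hγx : γ x ∈ γ '' Icc a b := mem_image_of_mem γ (Ico_subset_Icc_self hx)
  have hBρ : B x ≤ ρ := le_trans (by dsimp only [B]; gcongr; exact hx.2.le) hρ
  have hηx : η x ∈ Metric.cthickening ρ (γ '' Icc a b) :=
    Metric.mem_cthickening_of_dist_le _ _ _ _ hγx (by rwa [dist_eq_norm, hxB])
  calc ‖F (η x) - F (γ x)‖ ≤ L * ‖η x - γ x‖ :=
        hL.norm_sub_le hηx (Metric.self_subset_cthickening _ hγx)
    _ < (L + 1) * B x := by rw [hxB]; linarith [hBpos x]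

theorem exists_norm_sub_le {a b : ℝ} (hΩ : IsOpen Ω) (hF : LocallyLipschitzOn Ω F)
    (hγ : IsSolOn F Ω (Icc a b) γ) :
    ∃ ε > 0, ∃ C, ∀ η, IsSolOn F Ω (Icc a b) η → ‖η a - γ a‖ ≤ ε →
      ∀ t ∈ Icc a b, ‖η t - γ t‖ ≤ C * ‖η a - γ a‖ := by
  obtain ⟨ρ, hρ, L, hL⟩ := exists_lipschitzOnWith_cthickening hΩ hF
    (isCompact_Icc.image_of_continuousOn hγ.continuousOn) hγ.image_subset
  refine ⟨ρ / Real.exp ((L + 1) * (b - a)), by positivity, Real.exp ((L + 1) * (b - a)),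
    fun η hη hηγ t ht ↦ ?_⟩
  by_cases hne : γ a = η a
  · have hab : a ≤ b := ht.1.trans ht.2
    simp [hγ.eqOn hF ordConnected_Icc hη (left_mem_Icc.2 hab) hne ht, hne]
  · calc ‖η t - γ t‖ ≤ ‖η a - γ a‖ * Real.exp ((L + 1) * (t - a)) :=
          hγ.norm_sub_le_mul_exp hη hL hne ((le_div_iff₀ (Real.exp_pos _)).1 hηγ) ht
      _ ≤ ‖η a - γ a‖ * Real.exp ((L + 1) * (b - a)) := by
          gcongr
          exact ht.2
      _ = Real.exp ((L + 1) * (b - a)) * ‖η a - γ a‖ := mul_comm _ _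

theorem apply_ne (hF : LocallyLipschitzOn Ω F) (hs : s.OrdConnected) (hγ : IsSolOn F Ω s γ)
    (hη : IsSolOn F Ω s η) {t₀ t : ℝ} (ht₀ : t₀ ∈ s) (ht : t ∈ s) (hne : γ t₀ ≠ η t₀) :
    γ t ≠ η t :=
  fun h ↦ hne (hγ.eqOn hF hs hη ht h ht₀)

theorem continuousOn_slope (hF : LocallyLipschitzOn Ω F) (hγ : IsSolOn F Ω s γ)
    (hη : IsSolOn F Ω s η) (hne : ∀ t ∈ s, γ t ≠ η t) :
    ContinuousOn (fun t ↦ slope F (γ t) (η t)) s := by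
  have hFγ {ζ : ℝ → ℂ} (hζ : IsSolOn F Ω s ζ) : ContinuousOn (fun t ↦ F (ζ t)) s :=
    hF.continuousOn.comp hζ.continuousOn (mapsTo_iff_image_subset.2 hζ.image_subset)
  simp only [slope_def_field]
  exact ((hFγ hη).sub (hFγ hγ)).div (hη.continuousOn.sub hγ.continuousOn)
    fun t ht ↦ sub_ne_zero.2 (hne t ht).symm

theorem sub_eq_mul_exp_integral_slope {a b : ℝ} (hab : a ≤ b) (hF : LocallyLipschitzOn Ω F)
    (hγ : IsSolOn F Ω (Icc a b) γ) (hη : IsSolOn F Ω (Icc a b) η) (hne : γ a ≠ η a) :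
    η b - γ b = (η a - γ a) * Complex.exp (∫ t in a..b, slope F (γ t) (η t)) := by
  refine eq_mul_exp_integral_of_hasDerivWithinAt hab
    (hγ.continuousOn_slope hF hη fun t ht ↦
      hγ.apply_ne hF ordConnected_Icc hη (left_mem_Icc.2 hab) ht hne)
    (hη.continuousOn.fun_sub hγ.continuousOn) fun t ht ↦ ?_
  refine ((hη.hasDerivWithinAt_Ici ht).fun_sub (hγ.hasDerivWithinAt_Ici ht)).congr_deriv ?_
  rw [mul_comm, ← smul_eq_mul, sub_smul_slope, vsub_eq_sub]

end IsSolOn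

/-- A choice `Φ z` of a forward trajectory in `Ω` of every initial point `z ∈ U`, so that `(Φ · t)`
is the time-`t` map of the flow on `U`. The set `U` is not required to be invariant. -/
def IsForwardFlowOn (F : ℂ → ℂ) (Ω U : Set ℂ) (Φ : ℂ → ℝ → ℂ) : Prop :=
  ∀ z ∈ U, IsSolOn F Ω (Ici 0) (Φ z) ∧ Φ z 0 = z

namespace IsForwardFlowOn

variable {F : ℂ → ℂ} {Ω U : Set ℂ} {Φ : ℂ → ℝ → ℂ} {y : ℂ} {T : ℝ}

theorem mono {V : Set ℂ} (hΦ : IsForwardFlowOn F Ω U Φ) (hVU : V ⊆ U) : IsForwardFlowOn F Ω V Φ :=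
  fun z hz ↦ hΦ z (hVU hz)

theorem isSolOn_Icc (hΦ : IsForwardFlowOn F Ω U Φ) (hy : y ∈ U) :
    IsSolOn F Ω (Icc 0 T) (Φ y) :=
  (hΦ y hy).1.mono Icc_subset_Ici_self

theorem tendstoUniformlyOn (hΩ : IsOpen Ω) (hF : LocallyLipschitzOn Ω F)
    (hΦ : IsForwardFlowOn F Ω U Φ) (hy : y ∈ U) :
    TendstoUniformlyOn Φ (Φ y) (𝓝[U] y) (Icc 0 T) := by
  obtain ⟨ε, hε, C, hC⟩ := (hΦ.isSolOn_Icc hy).exists_norm_sub_le (b := T) hΩ hF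
  have hlim : Tendsto (fun z ↦ C * ‖z - y‖) (𝓝[U] y) (𝓝 0) := by
    have : Continuous fun z ↦ C * ‖z - y‖ := by fun_prop
    simpa using this.tendsto y |>.mono_left nhdsWithin_le_nhds
  have hball : ∀ᶠ z in 𝓝[U] y, ‖z - y‖ ≤ ε := by
    filter_upwards [nhdsWithin_le_nhds (Metric.closedBall_mem_nhds y hε)] with z hz
    rwa [← mem_closedBall_iff_norm]
  refine Metric.tendstoUniformlyOn_iff.2 fun δ hδ ↦ ?_
  filter_upwards [self_mem_nhdsWithin, hball, hlim.eventually_lt_const hδ] with z hz hzε hzδ t ht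
  have hle := hC (Φ z) (hΦ.isSolOn_Icc hz)
  rw [(hΦ z hz).2, (hΦ y hy).2] at hle
  rw [dist_comm, dist_eq_norm]
  exact (hle hzε t ht).trans_lt hzδ

theorem apply_add (hF : LocallyLipschitzOn Ω F) (hΦ : IsForwardFlowOn F Ω U Φ) (hy : y ∈ U)
    {τ t : ℝ} (hτ : 0 ≤ τ) (hyτ : Φ y τ ∈ U) (ht : 0 ≤ t) : Φ y (t + τ) = Φ (Φ y τ) t := by
  have hshift : IsSolOn F Ω (Ici 0) fun t ↦ Φ y (t + τ) :=
    ((hΦ y hy).1.comp_add_const τ).mono fun t ht ↦ add_nonneg ht hτ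
  refine hshift.eqOn hF ordConnected_Ici (hΦ _ hyτ).1 (mem_Ici.2 le_rfl) ?_ ht
  rw [zero_add, (hΦ _ hyτ).2]

theorem eventually_norm_slope_le (hΩ : IsOpen Ω) (hF : LocallyLipschitzOn Ω F)
    (hΦ : IsForwardFlowOn F Ω U Φ) (hy : y ∈ U) :
    ∃ L, ∀ᶠ z in 𝓝[U] y, ∀ t ∈ Icc 0 T, ‖slope F (Φ y t) (Φ z t)‖ ≤ L := by
  obtain ⟨ρ, hρ, L, hL⟩ := exists_lipschitzOnWith_cthickening hΩ hF
    (isCompact_Icc.image_of_continuousOn (hΦ.isSolOn_Icc hy).continuousOn)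
    (hΦ.isSolOn_Icc (T := T) hy).image_subset
  refine ⟨L, ?_⟩
  filter_upwards [Metric.tendstoUniformlyOn_iff.1 (hΦ.tendstoUniformlyOn hΩ hF hy) ρ hρ]
    with z hz t ht
  have hyt : Φ y t ∈ Φ y '' Icc 0 T := mem_image_of_mem _ ht
  have hzt : Φ z t ∈ Metric.cthickening ρ (Φ y '' Icc 0 T) :=
    Metric.mem_cthickening_of_dist_le _ _ _ _ hyt (dist_comm (Φ y t) _ ▸ (hz t ht).le)
  rw [slope_def_field, norm_div]
  exact div_le_of_le_mul₀ (norm_nonneg _) L.2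
    (hL.norm_sub_le hzt (Metric.self_subset_cthickening _ hyt))

theorem slope_eq_exp_integral_slope (hF : LocallyLipschitzOn Ω F) (hΦ : IsForwardFlowOn F Ω U Φ)
    (hy : y ∈ U) (hT : 0 ≤ T) {z : ℂ} (hz : z ∈ U) (hzy : z ≠ y) :
    slope (Φ · T) y z = Complex.exp (∫ t in 0..T, slope F (Φ y t) (Φ z t)) := by
  have hsub := (hΦ.isSolOn_Icc hy).sub_eq_mul_exp_integral_slope hT hF (hΦ.isSolOn_Icc hz)
  rw [(hΦ y hy).2, (hΦ z hz).2] at hsub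
  rw [slope_def_field, hsub hzy.symm, mul_div_cancel_left₀ _ (sub_ne_zero.2 hzy)]

theorem apply_ne_apply (hF : LocallyLipschitzOn Ω F) (hΦ : IsForwardFlowOn F Ω U Φ) (hy : y ∈ U)
    {z : ℂ} (hz : z ∈ U) (hzy : z ≠ y) {t : ℝ} (ht : 0 ≤ t) : Φ y t ≠ Φ z t := by
  refine (hΦ y hy).1.apply_ne hF ordConnected_Ici (hΦ z hz).1 (mem_Ici.2 le_rfl) ht ?_
  rwa [(hΦ y hy).2, (hΦ z hz).2, ne_comm]

theorem hasDerivWithinAt (hΩ : IsOpen Ω) (hF : DifferentiableOn ℂ F Ω)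
    (hΦ : IsForwardFlowOn F Ω U Φ) (hy : y ∈ U) (hT : 0 ≤ T) :
    HasDerivWithinAt (Φ · T) (Complex.exp (∫ t in 0..T, deriv F (Φ y t))) U y := by
  have hLip := locallyLipschitzOn_of_differentiableOn hΩ hF
  have hle : 𝓝[U \ {y}] y ≤ 𝓝[U] y := nhdsWithin_mono y sdiff_subset
  have hmem : ∀ᶠ z in 𝓝[U \ {y}] y, z ∈ U ∧ z ≠ y := self_mem_nhdsWithin
  obtain ⟨L, hL⟩ := hΦ.eventually_norm_slope_le (T := T) hΩ hLip hy
  have hIcc {t : ℝ} (ht : t ∈ uIoc 0 T) : t ∈ Icc 0 T :=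
    Ioc_subset_Icc_self (uIoc_of_le hT ▸ ht)
  have hint : Tendsto (fun z ↦ ∫ t in 0..T, slope F (Φ y t) (Φ z t)) (𝓝[U \ {y}] y)
      (𝓝 (∫ t in 0..T, deriv F (Φ y t))) := by
    refine intervalIntegral.tendsto_integral_filter_of_dominated_convergence (fun _ ↦ L) ?_ ?_
      intervalIntegrable_const (Eventually.of_forall fun t ht ↦ ?_)
    · filter_upwards [hmem] with z ⟨hz, hzy⟩
      refine ContinuousOn.aestronglyMeasurable ?_ measurableSet_uIoc
      exact ((hΦ.isSolOn_Icc hy).continuousOn_slope hLip (hΦ.isSolOn_Icc hz) fun t ht ↦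
        hΦ.apply_ne_apply hLip hy hz hzy ht.1).mono fun t ↦ hIcc
    · filter_upwards [hle hL] with z hz using Eventually.of_forall fun t ht ↦ hz t (hIcc ht)
    · have hderiv : HasDerivAt F (deriv F (Φ y t)) (Φ y t) :=
        (hF.differentiableAt (hΩ.mem_nhds ((hΦ y hy).1 t (hIcc ht).1).1)).hasDerivAt
      refine (hasDerivAt_iff_tendsto_slope.1 hderiv).comp (tendsto_nhdsWithin_iff.2 ⟨?_, ?_⟩)
      · exact ((hΦ.tendstoUniformlyOn hΩ hLip hy).tendsto_at (hIcc ht)).mono_left hle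
      · filter_upwards [hmem] with z ⟨hz, hzy⟩
        exact (hΦ.apply_ne_apply hLip hy hz hzy (hIcc ht).1).symm
  refine hasDerivWithinAt_iff_tendsto_slope.2 (hint.cexp.congr' ?_)
  filter_upwards [hmem] with z ⟨hz, hzy⟩
  exact (hΦ.slope_eq_exp_integral_slope hLip hy hT hz hzy).symm

theorem apply_eq_of_eq_zero (hF : LocallyLipschitzOn Ω F) (hΦ : IsForwardFlowOn F Ω U Φ)
    (hy : y ∈ U) (hFy : F y = 0) {t : ℝ} (ht : 0 ≤ t) : Φ y t = y := by
  have hyΩ : y ∈ Ω := (hΦ y hy).2 ▸ ((hΦ y hy).1 0 (mem_Ici.2 le_rfl)).1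
  exact (hΦ y hy).1.eqOn hF ordConnected_Ici (.const hyΩ hFy) (mem_Ici.2 le_rfl) (hΦ y hy).2 ht

theorem hasDerivWithinAt_of_eq_zero (hΩ : IsOpen Ω) (hF : DifferentiableOn ℂ F Ω)
    (hΦ : IsForwardFlowOn F Ω U Φ) (hy : y ∈ U) (hFy : F y = 0) (hT : 0 ≤ T) :
    HasDerivWithinAt (Φ · T) (Complex.exp (T * deriv F y)) U y := by
  have hint : ∫ t in 0..T, deriv F (Φ y t) = T * deriv F y := by
    have hconst : EqOn (fun t ↦ deriv F (Φ y t)) (fun _ ↦ deriv F y) (uIcc 0 T) := fun t ht ↦ by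
      rw [uIcc_of_le hT] at ht
      simp only [hΦ.apply_eq_of_eq_zero (locallyLipschitzOn_of_differentiableOn hΩ hF) hy hFy ht.1]
    rw [intervalIntegral.integral_congr hconst, intervalIntegral.integral_const, sub_zero,
      Complex.real_smul]
  exact hint ▸ hΦ.hasDerivWithinAt hΩ hF hy hT

theorem exists_bound_until_return (hΩ : IsOpen Ω) (hF : LocallyLipschitzOn Ω F) {K : Set ℂ}
    (hK : IsCompact K) (hΦ : IsForwardFlowOn F Ω K Φ)
    (hret : ∀ z ∈ K, ∃ τ ≥ 1, Φ z τ ∈ interior K) :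
    ∃ M, ∀ z ∈ K, ∃ τ ≥ 1, Φ z τ ∈ K ∧ ∀ t ∈ Icc 0 τ, ‖Φ z t‖ ≤ M := by
  refine hK.induction_on (p := fun s ↦ ∃ M, ∀ z ∈ s, ∃ τ ≥ 1, Φ z τ ∈ K ∧
    ∀ t ∈ Icc 0 τ, ‖Φ z t‖ ≤ M) ⟨0, by simp⟩ ?_ ?_ ?_
  · rintro s t hst ⟨M, hM⟩
    exact ⟨M, fun z hz ↦ hM z (hst hz)⟩
  · rintro s t ⟨M, hM⟩ ⟨N, hN⟩
    refine ⟨max M N, ?_⟩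
    rintro z (hz | hz)
    · obtain ⟨τ, hτ, hret, hle⟩ := hM z hz
      exact ⟨τ, hτ, hret, fun t ht ↦ (hle t ht).trans (le_max_left M N)⟩
    · obtain ⟨τ, hτ, hret, hle⟩ := hN z hz
      exact ⟨τ, hτ, hret, fun t ht ↦ (hle t ht).trans (le_max_right M N)⟩
  · intro z hz
    obtain ⟨τ, hτ, hzτ⟩ := hret z hz
    have hτ' : τ ∈ Icc 0 τ := right_mem_Icc.2 (zero_le_one.trans hτ)
    have hlim := hΦ.tendstoUniformlyOn (T := τ) hΩ hF hz
    obtain ⟨M, hM⟩ :=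
      isCompact_Icc.exists_bound_of_continuousOn (hΦ.isSolOn_Icc (T := τ) hz).continuousOn
    refine ⟨_, (hlim.tendsto_at hτ').eventually (mem_interior_iff_mem_nhds.1 hzτ) |>.and
      (Metric.tendstoUniformlyOn_iff.1 hlim 1 one_pos), M + 1, ?_⟩
    rintro w ⟨hwτ, hw⟩
    refine ⟨τ, hτ, hwτ, fun t ht ↦ ?_⟩
    have hdist := hw t ht
    rw [dist_comm, dist_eq_norm] at hdist
    linarith [hM t ht, norm_le_norm_add_norm_sub' (Φ w t) (Φ z t)]

theorem exists_bound (hΩ : IsOpen Ω) (hF : LocallyLipschitzOn Ω F) {K : Set ℂ}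
    (hK : IsCompact K) (hΦ : IsForwardFlowOn F Ω K Φ)
    (hret : ∀ z ∈ K, ∃ τ ≥ 1, Φ z τ ∈ interior K) :
    ∃ M, ∀ z ∈ K, ∀ t ≥ 0, ‖Φ z t‖ ≤ M := by
  obtain ⟨M, hM⟩ := hΦ.exists_bound_until_return hΩ hF hK hret
  have hbound (n : ℕ) : ∀ z ∈ K, ∀ t ∈ Icc (0 : ℝ) n, ‖Φ z t‖ ≤ M := by
    induction n with
    | zero =>
      rintro z hz t ht
      obtain ⟨τ, hτ, -, hle⟩ := hM z hz
      exact hle t ⟨ht.1, ht.2.trans (by push_cast; linarith)⟩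
    | succ n ih =>
      intro z hz t ht
      obtain ⟨τ, hτ, hzτ, hle⟩ := hM z hz
      rcases le_total t τ with htτ | hτt
      · exact hle t ⟨ht.1, htτ⟩
      · have hadd := hΦ.apply_add hF hz (zero_le_one.trans hτ) hzτ (sub_nonneg.2 hτt)
        rw [sub_add_cancel] at hadd
        rw [hadd]
        have htn := ht.2
        push_cast at htn
        exact ih _ hzτ _ ⟨sub_nonneg.2 hτt, by linarith⟩
  exact ⟨M, fun z hz t ht ↦ hbound ⌈t⌉₊ z hz t ⟨ht, Nat.le_ceil t⟩⟩

end IsForwardFlowOn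

section Attracting

variable {F : ℂ → ℂ} {Ω : Set ℂ} {a : ℂ}

theorem exists_isForwardFlowOn_tendsto (ha : a ∈ Ω) (hFa : F a = 0)
    (h : ∀ᶠ y in 𝓝[≠] a, ∃ γ, IsSolOn F Ω (Ici 0) γ ∧ γ 0 = y ∧ Tendsto γ atTop (𝓝 a)) :
    ∃ U ∈ 𝓝 a, ∃ Φ, IsForwardFlowOn F Ω U Φ ∧ ∀ z ∈ U, Tendsto (Φ z) atTop (𝓝 a) := by
  have hall : ∀ᶠ y in 𝓝 a,
      ∃ γ, IsSolOn F Ω (Ici 0) γ ∧ γ 0 = y ∧ Tendsto γ atTop (𝓝 a) := by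
    filter_upwards [eventually_nhdsWithin_iff.1 h] with y hy
    rcases eq_or_ne y a with rfl | hya
    · exact ⟨fun _ ↦ y, .const ha hFa, rfl, tendsto_const_nhds⟩
    · exact hy hya
  obtain ⟨U, hU, hγ⟩ := eventually_iff_exists_mem.1 hall
  choose! Φ hsol hΦ0 hlim using hγ
  exact ⟨U, hU, Φ, fun z hz ↦ ⟨hsol z hz, hΦ0 z hz⟩, hlim⟩

theorem IsForwardFlowOn.tendsto_exp_mul_deriv {r : ℝ} {Φ : ℂ → ℝ → ℂ} (hΩ : IsOpen Ω)
    (hF : DifferentiableOn ℂ F Ω) (hFa : F a = 0) (hr : 0 < r)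
    (hΦ : IsForwardFlowOn F Ω (Metric.closedBall a r) Φ)
    (hlim : ∀ z ∈ Metric.closedBall a r, Tendsto (Φ z) atTop (𝓝 a)) :
    Tendsto (fun t : ℝ ↦ Complex.exp (t * deriv F a)) atTop (𝓝 0) := by
  have hLip := locallyLipschitzOn_of_differentiableOn hΩ hF
  have hnhds : Metric.closedBall a r ∈ 𝓝 a := Metric.closedBall_mem_nhds a hr
  have hret (z : ℂ) (hz : z ∈ Metric.closedBall a r) :
      ∃ τ ≥ 1, Φ z τ ∈ interior (Metric.closedBall a r) :=
    ((eventually_ge_atTop 1).and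
      ((hlim z hz).eventually (interior_mem_nhds.2 hnhds))).exists
  obtain ⟨M, hM⟩ := hΦ.exists_bound hΩ hLip (isCompact_closedBall a r) hret
  have hdiff (t : ℝ) (ht : 0 ≤ t) : DiffContOnCl ℂ (Φ · t) (Metric.ball a r) :=
    DifferentiableOn.diffContOnCl_ball (U := Metric.closedBall a r)
      (fun z hz ↦ (hΦ.hasDerivWithinAt hΩ hF hz ht).differentiableWithinAt) subset_rfl
  have hderiv : Tendsto (fun t ↦ deriv (Φ · t) a) atTop (𝓝 (deriv (fun _ ↦ a) a)) :=
    tendsto_deriv_of_bounded_on_sphere (f := fun t z ↦ Φ z t) hr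
      (eventually_ge_atTop 0 |>.mono hdiff) diffContOnCl_const
      (eventually_ge_atTop 0 |>.mono fun t ht z hz ↦
        hM z (Metric.sphere_subset_closedBall hz) t ht)
      fun z hz ↦ hlim z (Metric.sphere_subset_closedBall hz)
  rw [deriv_const] at hderiv
  refine hderiv.congr' ?_
  filter_upwards [eventually_ge_atTop 0] with t ht
  exact ((hΦ.hasDerivWithinAt_of_eq_zero hΩ hF (mem_of_mem_nhds hnhds) hFa ht).hasDerivAt
    hnhds).deriv

theorem re_deriv_neg_of_eventually_tendsto_atTop (hΩ : IsOpen Ω) (hF : DifferentiableOn ℂ F Ω)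
    (ha : a ∈ Ω) (hFa : F a = 0)
    (h : ∀ᶠ y in 𝓝[≠] a, ∃ γ, IsSolOn F Ω (Ici 0) γ ∧ γ 0 = y ∧ Tendsto γ atTop (𝓝 a)) :
    (deriv F a).re < 0 := by
  obtain ⟨U, hU, Φ, hΦ, hlim⟩ := exists_isForwardFlowOn_tendsto ha hFa h
  obtain ⟨r, hr, hrU⟩ := Metric.nhds_basis_closedBall.mem_iff.1 hU
  have hexp := (hΦ.mono hrU).tendsto_exp_mul_deriv hΩ hF hFa hr fun z hz ↦ hlim z (hrU hz)
  obtain ⟨t, ht, hlt⟩ := ((eventually_ge_atTop 0).and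
    (hexp.norm.eventually_lt_const (norm_zero.trans_lt one_pos))).exists
  rw [Complex.norm_exp, Complex.re_ofReal_mul, Real.exp_lt_one_iff] at hlt
  exact neg_of_mul_neg_right hlt ht

theorem re_deriv_pos_of_eventually_tendsto_atBot (hΩ : IsOpen Ω) (hF : DifferentiableOn ℂ F Ω)
    (ha : a ∈ Ω) (hFa : F a = 0)
    (h : ∀ᶠ y in 𝓝[≠] a, ∃ γ, IsSolOn F Ω (Iic 0) γ ∧ γ 0 = y ∧ Tendsto γ atBot (𝓝 a)) :
    0 < (deriv F a).re := by
  have hneg : (deriv (fun z ↦ -F z) a).re < 0 := by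
    refine re_deriv_neg_of_eventually_tendsto_atTop hΩ hF.fun_neg ha (by simp [hFa]) ?_
    filter_upwards [h] with y ⟨γ, hγ, hγ0, hlim⟩
    exact ⟨fun t ↦ γ (-t), hγ.comp_neg.mono fun t ht ↦ neg_nonpos.2 (mem_Ici.1 ht), by simpa,
      hlim.comp tendsto_neg_atTop_atBot⟩
  rwa [deriv.fun_neg, Complex.neg_re, neg_lt_zero] at hneg

end Attracting

theorem eventually_nhdsNE_of_forall_dist {X : Type*} [MetricSpace X] {p : X → Prop} {a : X}
    {δ : ℝ} (hδ : 0 < δ) (h : ∀ y, 0 < dist y a → dist y a < δ → p y) : ∀ᶠ y in 𝓝[≠] a, p y := by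
  filter_upwards [self_mem_nhdsWithin, nhdsWithin_le_nhds (Metric.ball_mem_nhds a hδ)] with y hya hy
  exact h y (dist_pos.2 hya) hy

theorem stmt_13_general (Ω : Set ℂ) (hΩ : IsOpen Ω) (F : ℂ → ℂ) (hF : DifferentiableOn ℂ F Ω)
    (a : ℂ) (ha : a ∈ Ω) (hFa : F a = 0)
    (hyp :
      (∀ᶠ y in 𝓝[≠] a, ∃ γ, IsSolOn F Ω (Ici 0) γ ∧ γ 0 = y ∧ Tendsto γ atTop (𝓝 a)) ∨
      (∀ᶠ y in 𝓝[≠] a, ∃ γ, IsSolOn F Ω (Iic 0) γ ∧ γ 0 = y ∧ Tendsto γ atBot (𝓝 a))) :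
    (deriv F a).re ≠ 0 :=
  hyp.elim (fun h ↦ (re_deriv_neg_of_eventually_tendsto_atTop hΩ hF ha hFa h).ne)
    fun h ↦ (re_deriv_pos_of_eventually_tendsto_atBot hΩ hF ha hFa h).ne'

/-- if all orbits through a punctured `δ`-ball around an equilibrium `a` of
a holomorphic flow tend to `a` forward in time (or all backward in time), then
`F'(a) ≠ 0`; i.e. stable/unstable nodes and foci have order 1. -/
theorem stmt_13 (Ω : Set ℂ) (hΩ : IsOpen Ω) (hconn : IsConnected Ω)
    (F : ℂ → ℂ) (hF : DifferentiableOn ℂ F Ω) (hF0 : ∃ z ∈ Ω, F z ≠ 0)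
    (a : ℂ) (ha : a ∈ Ω) (hFa : F a = 0)
    (hyp : ∃ δ > 0, Metric.closedBall a δ ⊆ Ω ∧
      ((∀ y : ℂ, 0 < dist y a → dist y a < δ →
          ∃ γ : ℝ → ℂ, IsSolOn F Ω (Ici 0) γ ∧ γ 0 = y ∧ Tendsto γ atTop (nhds a)) ∨
       (∀ y : ℂ, 0 < dist y a → dist y a < δ →
          ∃ γ : ℝ → ℂ, IsSolOn F Ω (Iic 0) γ ∧ γ 0 = y ∧ Tendsto γ atBot (nhds a)))) :
    deriv F a ≠ 0 := by
  obtain ⟨δ, hδ, -, h⟩ := hyp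
  have hre : (deriv F a).re ≠ 0 := stmt_13_general Ω hΩ F hF a ha hFa
    (h.imp (eventually_nhdsNE_of_forall_dist hδ) (eventually_nhdsNE_of_forall_dist hδ))
  exact fun h0 ↦ hre (by rw [h0, Complex.zero_re])
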